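/- Let S be a numerical monoid. Then almost all elements of the restricted power monoid P_fin,0(S) are atoms: writing a(x) for the number of atoms A of P_fin,0(S) with max(A) ≤ x and t(x) for the number of elements A of P_fin,0(S) with max(A) ≤ x, the ratio a(x)/t(x) tends to 1 as x → ∞. -/

import Mathlib

open Pointwise

/-- The restricted power monoid `P_fin,0(S)`: finite subsets of `S` containing `0`. -/
def Pfin0 (S : AddSubmonoid ℕ) : Set (Finset ℕ) :=
  {A | 0 ∈ A ∧ (A : Set ℕ) ⊆ (S : Set ℕ)}

/-- Atoms of `P_fin,0(S)`. -/
def IsAtom0 (S : AddSubmonoid ℕ) (U : Finset ℕ) : Prop :=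
  U ∈ Pfin0 S ∧ U ≠ {0} ∧
    ∀ B ∈ Pfin0 S, ∀ C ∈ Pfin0 S, U = B + C → B = {0} ∨ C = {0}

/-!
For a random `U ⊆ [0, N)` and a fixed `d > 0`, about a quarter of the `t < m` satisfy
`t ∈ U` and `t + d ∈ U`. All but a negligible proportion of the `U` have, for every `d > 0` and `m`,
at most `m log 2 / log 5 + O(log N)` such `t`. Suppose that `A = B + C` has this property, where `B`
and `C` contain `0` and some nonzero `d ∈ B` and `e ∈ C`. Then `C ∪ (d + C) ⊆ A` and
`B ∪ (e + B) ⊆ A` force `B` and `C` to be sparse. Since `log 2 / log 5 < 1 / 2`, the number of pairs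
of such sparse sets with `max B + max C < N` is `O(ρ ^ N)` for some `ρ < 2`. Hence only `o(2 ^ N)`
subsets of `[0, N)` decompose, whereas `P_fin,0(S)` contains a positive proportion of all of them.
-/

section

open Finset Filter
open scoped Topology

theorem sum_powerset_pow_card {ι R : Type*} [CommSemiring R] (y : R) (s : Finset ι) :
    ∑ B ∈ s.powerset, y ^ #B = (y + 1) ^ #s := by
  simpa using Finset.sum_pow_mul_eq_add_pow y 1 s

section Matching

variable {α : Type*} [DecidableEq α]

theorem four_pow_card_mul_card_Icc_union_image_le {C : Finset α} {f : α → α}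
    (hf : Set.InjOn f C) (hdisj : Disjoint C (C.image f)) (R : Finset α) :
    4 ^ #C * #(Icc (C ∪ C.image f) R) ≤ 2 ^ #R := by
  by_cases hR : C ∪ C.image f ⊆ R
  · have hcard : #(C ∪ C.image f) = 2 * #C := by
      rw [card_union_of_disjoint hdisj, card_image_of_injOn hf, two_mul]
    rw [card_Icc_finset hR, hcard, show 4 = 2 ^ 2 by rfl, ← pow_mul, ← pow_add,
      Nat.add_sub_cancel' (hcard ▸ card_le_card hR)]
  · simp [Icc_eq_empty hR]

/- The base `5 = 4 + 1` makes every `C ⊆ A` contribute at most `2 ^ #R` after the sums are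
exchanged: `C ∪ f(C)` has `2 ^ (#R - 2 * #C)` supersets in `R` and comes with weight `4 ^ #C`. -/
theorem sum_powerset_five_pow_card_filter_le {A : Finset α} {f : α → α} (hf : Set.InjOn f A)
    (hdisj : Disjoint A (A.image f)) (R : Finset α) :
    ∑ U ∈ R.powerset, 5 ^ #{a ∈ A | a ∈ U ∧ f a ∈ U} ≤ 2 ^ (#R + #A) := by
  calc ∑ U ∈ R.powerset, 5 ^ #{a ∈ A | a ∈ U ∧ f a ∈ U}
      = ∑ U ∈ R.powerset, ∑ C ∈ powerset {a ∈ A | a ∈ U ∧ f a ∈ U}, 4 ^ #C :=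
        sum_congr rfl fun U _ => (sum_powerset_pow_card 4 _).symm
    _ = ∑ C ∈ A.powerset, ∑ _U ∈ Icc (C ∪ C.image f) R, 4 ^ #C := by
        refine sum_comm' fun U C => ?_
        simp only [mem_powerset, mem_Icc, subset_iff, mem_filter, mem_union, mem_image]
        grind
    _ = ∑ C ∈ A.powerset, 4 ^ #C * #(Icc (C ∪ C.image f) R) := by
        simp only [sum_const, smul_eq_mul, mul_comm]
    _ ≤ ∑ _C ∈ A.powerset, 2 ^ #R := by
        refine sum_le_sum fun C hC => ?_
        have hCA := mem_powerset.1 hC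
        exact four_pow_card_mul_card_Icc_union_image_le (hf.mono hCA)
          (hdisj.mono hCA (image_subset_image hCA)) R
    _ = 2 ^ (#R + #A) := by
        rw [sum_const, card_powerset, smul_eq_mul, pow_add, mul_comm]

theorem mul_card_filter_lt_five_pow_le {A : Finset α} {f : α → α} (hf : Set.InjOn f A)
    (hdisj : Disjoint A (A.image f)) (R : Finset α) (Q : ℕ) :
    Q * #{U ∈ R.powerset | Q * 2 ^ #A < 5 ^ #{a ∈ A | a ∈ U ∧ f a ∈ U}} ≤ 2 ^ #R := by
  set F := {U ∈ R.powerset | Q * 2 ^ #A < 5 ^ #{a ∈ A | a ∈ U ∧ f a ∈ U}}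
  have hmarkov : #F * (Q * 2 ^ #A) ≤ 2 ^ #R * 2 ^ #A := by
    rw [← pow_add]
    calc #F * (Q * 2 ^ #A) ≤ ∑ U ∈ F, 5 ^ #{a ∈ A | a ∈ U ∧ f a ∈ U} :=
          card_nsmul_le_sum F _ _ fun U hU => (mem_filter.1 hU).2.le
      _ ≤ ∑ U ∈ R.powerset, 5 ^ #{a ∈ A | a ∈ U ∧ f a ∈ U} :=
          sum_le_sum_of_subset (filter_subset _ _)
      _ ≤ 2 ^ (#R + #A) := sum_powerset_five_pow_card_filter_le hf hdisj R
  refine Nat.le_of_mul_le_mul_right (le_of_eq_of_le ?_ hmarkov) (Nat.two_pow_pos #A)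
  ring

end Matching

/-- The elements `t` of `A` for which `U` contains the pair `{t, t + d}`. -/
def pairStarts (d : ℕ) (A U : Finset ℕ) : Finset ℕ :=
  {t ∈ A | t ∈ U ∧ t + d ∈ U}

/-- The part of `A` lying in the blocks `[j * d, (j + 1) * d)` with `j % 2 = i`. For `i = 0, 1` this
splits `A` into two parts, each of them disjoint from its translate by `d`. -/
def parityBlock (d i : ℕ) (A : Finset ℕ) : Finset ℕ :=
  {t ∈ A | t / d % 2 = i}

theorem card_parityBlock_zero_add_card_parityBlock_one (d : ℕ) (A : Finset ℕ) :
    #(parityBlock d 0 A) + #(parityBlock d 1 A) = #A := by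
  simpa only [parityBlock, Nat.mod_two_not_eq_zero] using
    card_filter_add_card_filter_not (s := A) (fun t => t / d % 2 = 0)

theorem disjoint_parityBlock_image_add {d : ℕ} (hd : 0 < d) (i : ℕ) (A : Finset ℕ) :
    Disjoint (parityBlock d i A) ((parityBlock d i A).image (· + d)) := by
  simp only [disjoint_left, mem_image, parityBlock, mem_filter]
  rintro _ ⟨-, hmod⟩ ⟨t, ⟨-, ht⟩, rfl⟩
  rw [Nat.add_div_right t hd] at hmod
  omega

theorem pairStarts_parityBlock (d i : ℕ) (A U : Finset ℕ) :
    pairStarts d (parityBlock d i A) U = parityBlock d i (pairStarts d A U) :=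
  filter_comm _ _ _

/-- The subsets `C` of `[0, m)` with `#C ≤ m log 2 / log 5 + O(log K)`. The exponent of `K` avoids
roots in the estimates. -/
def sparseSubsets (K m : ℕ) : Finset (Finset ℕ) :=
  {C ∈ (range m).powerset | 5 ^ #C ≤ K ^ 6 * 2 ^ m}

/-- The subsets `U` of `[0, N)` containing unexpectedly many pairs `{t, t + d}` with `t < m`. -/
def richSubsets (K N d m : ℕ) : Finset (Finset ℕ) :=
  {U ∈ (range N).powerset | pairStarts d (range m) U ∉ sparseSubsets K m}

theorem exists_lt_five_pow_of_mem_richSubsets {K N d m : ℕ} {U : Finset ℕ}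
    (hU : U ∈ richSubsets K N d m) :
    ∃ i ∈ range 2, K ^ 3 * 2 ^ #(parityBlock d i (range m)) <
      5 ^ #(pairStarts d (parityBlock d i (range m)) U) := by
  by_contra! hle
  have hrange : pairStarts d (range m) U ∈ (range m).powerset :=
    mem_powerset.2 (filter_subset _ _)
  refine (mem_filter.1 hU).2 (mem_filter.2 ⟨hrange, ?_⟩)
  rw [← card_parityBlock_zero_add_card_parityBlock_one d (pairStarts d (range m) U),
    ← pairStarts_parityBlock, ← pairStarts_parityBlock, pow_add]
  calc _ ≤ (K ^ 3 * 2 ^ #(parityBlock d 0 (range m))) *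
        (K ^ 3 * 2 ^ #(parityBlock d 1 (range m))) :=
        Nat.mul_le_mul (hle 0 (by simp)) (hle 1 (by simp))
    _ = K ^ 6 * 2 ^ (#(parityBlock d 0 (range m)) + #(parityBlock d 1 (range m))) := by ring
    _ = K ^ 6 * 2 ^ m := by
        rw [card_parityBlock_zero_add_card_parityBlock_one, card_range]

theorem pow_three_mul_card_richSubsets_le (K N m : ℕ) {d : ℕ} (hd : 0 < d) :
    K ^ 3 * #(richSubsets K N d m) ≤ 2 ^ (N + 1) := by
  let E (i : ℕ) : Finset (Finset ℕ) :=
    {U ∈ (range N).powerset | K ^ 3 * 2 ^ #(parityBlock d i (range m)) <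
      5 ^ #(pairStarts d (parityBlock d i (range m)) U)}
  have hE (i : ℕ) : K ^ 3 * #(E i) ≤ 2 ^ N := 
    (mul_card_filter_lt_five_pow_le (add_left_injective d).injOn
      (disjoint_parityBlock_image_add hd i (range m)) (range N) (K ^ 3)).trans_eq
      (by rw [card_range])
  have hsub : richSubsets K N d m ⊆ (range 2).biUnion E := fun U hU => by
    obtain ⟨i, hi, hlt⟩ := exists_lt_five_pow_of_mem_richSubsets hU
    exact mem_biUnion.2 ⟨i, hi, mem_filter.2 ⟨(mem_filter.1 hU).1, hlt⟩⟩
  calc K ^ 3 * #(richSubsets K N d m) ≤ K ^ 3 * ∑ i ∈ range 2, #(E i) := by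
        gcongr
        exact (card_le_card hsub).trans card_biUnion_le
    _ = K ^ 3 * #(E 0) + K ^ 3 * #(E 1) := by rw [sum_range_succ, sum_range_one, mul_add]
    _ ≤ 2 ^ N + 2 ^ N := add_le_add (hE 0) (hE 1)
    _ = 2 ^ (N + 1) := by ring

theorem one_le_weight_of_mem_sparseSubsets {K m : ℕ} {C : Finset ℕ} (hC : C ∈ sparseSubsets K m) :
    (1 : ℝ) ≤ K * (9 / 8) ^ m * (10 / 13) ^ #C := by
  have hsparse : (5 : ℝ) ^ #C ≤ K ^ 6 * 2 ^ m := by exact_mod_cast (mem_filter.1 hC).2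
  have hsixth : ((13 / 10 : ℝ) ^ #C) ^ 6 ≤ (K * (9 / 8) ^ m) ^ 6 :=
    calc ((13 / 10 : ℝ) ^ #C) ^ 6 = ((13 / 10) ^ 6) ^ #C := pow_right_comm _ _ _
      _ ≤ 5 ^ #C := by gcongr; norm_num
      _ ≤ K ^ 6 * 2 ^ m := hsparse
      _ ≤ K ^ 6 * ((9 / 8) ^ 6) ^ m := by gcongr; norm_num
      _ = (K * (9 / 8) ^ m) ^ 6 := by rw [mul_pow, pow_right_comm]
  calc (1 : ℝ) = (13 / 10) ^ #C * (10 / 13) ^ #C := by rw [← mul_pow]; norm_num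
    _ ≤ K * (9 / 8) ^ m * (10 / 13) ^ #C := by
        gcongr
        exact le_of_pow_le_pow_left₀ (by norm_num) (by positivity) hsixth

/- The growth rate is `207 / 104 = (9 / 8) * (1 + 10 / 13)`; what matters is that it is below
`2`. -/
theorem card_sparseSubsets_le (K m : ℕ) : (#(sparseSubsets K m) : ℝ) ≤ K * (207 / 104) ^ m :=
  calc (#(sparseSubsets K m) : ℝ) = ∑ _C ∈ sparseSubsets K m, 1 := by simp
    _ ≤ ∑ C ∈ sparseSubsets K m, K * (9 / 8 : ℝ) ^ m * (10 / 13) ^ #C :=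
        sum_le_sum fun _ => one_le_weight_of_mem_sparseSubsets
    _ ≤ ∑ C ∈ (range m).powerset, K * (9 / 8 : ℝ) ^ m * (10 / 13) ^ #C :=
        sum_le_sum_of_subset_of_nonneg (filter_subset _ _) fun _ _ _ => by positivity
    _ = K * (207 / 104) ^ m := by
        rw [← mul_sum, sum_powerset_pow_card, card_range, mul_assoc, ← mul_pow]
        norm_num

/-- Decomposability in the power monoid `P_fin,0(ℕ)`: `A` is a sum of two sets which contain `0` and
are not equal to `{0}`. -/
def IsDecomposable (A : Finset ℕ) : Prop :=
  ∃ B C : Finset ℕ, (0 ∈ B ∧ B ≠ {0}) ∧ (0 ∈ C ∧ C ≠ {0}) ∧ A = B + C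

theorem exists_pos_mem_of_ne_singleton_zero {B : Finset ℕ} (h0 : 0 ∈ B) (hB : B ≠ {0}) :
    ∃ d ∈ B, 0 < d := by
  obtain ⟨d, hd, hd0⟩ := ((nontrivial_iff_ne_singleton h0).2 hB).exists_ne 0
  exact ⟨d, hd, Nat.pos_of_ne_zero hd0⟩

theorem mem_sparseSubsets_of_notMem_richSubsets {K N d m : ℕ} {A C : Finset ℕ}
    (hA : A ⊆ range N) (hrich : A ∉ richSubsets K N d m) (hCm : C ⊆ range m)
    (hCA : ∀ c ∈ C, c ∈ A ∧ c + d ∈ A) : C ∈ sparseSubsets K m := by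
  have hpairs : pairStarts d (range m) A ∈ sparseSubsets K m := by
    by_contra h
    exact hrich (mem_filter.2 ⟨mem_powerset.2 hA, h⟩)
  have hsub : C ⊆ pairStarts d (range m) A := fun c hc =>
    mem_filter.2 ⟨hCm hc, hCA c hc⟩
  exact mem_filter.2 ⟨mem_powerset.2 hCm, (Nat.pow_le_pow_right (by norm_num)
    (card_le_card hsub)).trans (mem_filter.1 hpairs).2⟩

theorem IsDecomposable.exists_mem_richSubsets_or_exists_mem_add {N : ℕ} {A : Finset ℕ}
    (hA : IsDecomposable A) (hAN : A ⊆ range N) (K : ℕ) :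
    (∃ d ∈ Ioc 0 N, ∃ m ∈ range N, A ∈ richSubsets K N d m) ∨
      ∃ b ∈ range N, A ∈ sparseSubsets K (b + 1) + sparseSubsets K (N - b) := by
  obtain ⟨B, C, ⟨hB0, hB⟩, ⟨hC0, hC⟩, rfl⟩ := hA
  obtain ⟨d, hdB, hd⟩ := exists_pos_mem_of_ne_singleton_zero hB0 hB
  obtain ⟨e, heC, he⟩ := exists_pos_mem_of_ne_singleton_zero hC0 hC
  have hlt {x y : ℕ} (hx : x ∈ B) (hy : y ∈ C) : x + y < N :=
    mem_range.1 (hAN (add_mem_add hx hy))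
  obtain ⟨b, hbB, hmax⟩ := B.exists_max_image id ⟨0, hB0⟩
  have hdb : d ≤ b := hmax d hdB
  have hbe : b + e < N := hlt hbB heC
  refine or_iff_not_imp_left.2 fun hrich => ?_
  push Not at hrich
  refine ⟨b, mem_range.2 (by omega), add_mem_add ?_ ?_⟩
  · refine mem_sparseSubsets_of_notMem_richSubsets hAN
      (hrich e (mem_Ioc.2 ⟨he, by omega⟩) (b + 1) (mem_range.2 (by omega)))
      (fun x hx => mem_range.2 (Nat.lt_succ_of_le (hmax x hx)))
      fun x hx => ⟨by simpa using add_mem_add hx hC0, add_mem_add hx heC⟩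
  · refine mem_sparseSubsets_of_notMem_richSubsets hAN
      (hrich d (mem_Ioc.2 ⟨hd, by omega⟩) (N - b) (mem_range.2 (by omega)))
      (fun y hy => mem_range.2 (Nat.lt_sub_iff_add_lt'.2 (hlt hbB hy)))
      fun y hy => ⟨by simpa using add_mem_add hB0 hy, add_comm d y ▸ add_mem_add hdB hy⟩

theorem card_biUnion_richSubsets_le {K : ℕ} (hK : 0 < K) (N : ℕ) :
    (#((Ioc 0 N ×ˢ range N).biUnion fun p => richSubsets K N p.1 p.2) : ℝ) ≤
      N ^ 2 * (2 ^ (N + 1) / K ^ 3) := by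
  have hrich : ∀ p ∈ Ioc 0 N ×ˢ range N,
      (#(richSubsets K N p.1 p.2) : ℝ) ≤ 2 ^ (N + 1) / K ^ 3 := fun p hp => by
    rw [le_div_iff₀' (by positivity)]
    exact_mod_cast pow_three_mul_card_richSubsets_le K N p.2
      (mem_Ioc.1 (mem_product.1 hp).1).1
  calc _ ≤ ∑ p ∈ Ioc 0 N ×ˢ range N, (#(richSubsets K N p.1 p.2) : ℝ) := by
        exact_mod_cast card_biUnion_le
    _ ≤ #(Ioc 0 N ×ˢ range N) • (2 ^ (N + 1) / (K : ℝ) ^ 3) := sum_le_card_nsmul _ _ _ hrich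
    _ = N ^ 2 * (2 ^ (N + 1) / K ^ 3) := by simp [sq]

theorem card_biUnion_sparseSubsets_add_le (K N : ℕ) :
    (#((range N).biUnion fun b => sparseSubsets K (b + 1) + sparseSubsets K (N - b)) : ℝ) ≤
      N * (K ^ 2 * (207 / 104) ^ (N + 1)) := by
  have hsparse : ∀ b ∈ range N, (#(sparseSubsets K (b + 1) + sparseSubsets K (N - b)) : ℝ) ≤
      K ^ 2 * (207 / 104) ^ (N + 1) := fun b hb => by
    have hbN : N + 1 = (b + 1) + (N - b) := by have := mem_range.1 hb; omega
    calc _ ≤ (#(sparseSubsets K (b + 1)) * #(sparseSubsets K (N - b)) : ℝ) := by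
          exact_mod_cast card_add_le
      _ ≤ (K * (207 / 104) ^ (b + 1)) * (K * (207 / 104) ^ (N - b)) :=
          mul_le_mul (card_sparseSubsets_le K _) (card_sparseSubsets_le K _) (by positivity)
            (by positivity)
      _ = K ^ 2 * (207 / 104) ^ (N + 1) := by rw [hbN, pow_add]; ring
  calc _ ≤ ∑ b ∈ range N, (#(sparseSubsets K (b + 1) + sparseSubsets K (N - b)) : ℝ) := by
        exact_mod_cast card_biUnion_le
    _ ≤ #(range N) • ((K : ℝ) ^ 2 * (207 / 104) ^ (N + 1)) := sum_le_card_nsmul _ _ _ hsparse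
    _ = N * (K ^ 2 * (207 / 104) ^ (N + 1)) := by rw [card_range, nsmul_eq_mul]

theorem ncard_isDecomposable_le {K : ℕ} (hK : 0 < K) (N : ℕ) :
    ({A : Finset ℕ | A ⊆ range N ∧ IsDecomposable A}.ncard : ℝ) ≤
      N ^ 2 * (2 ^ (N + 1) / K ^ 3) + N * (K ^ 2 * (207 / 104) ^ (N + 1)) := by
  set rich := (Ioc 0 N ×ˢ range N).biUnion fun p => richSubsets K N p.1 p.2
  set sums := (range N).biUnion fun b =>
    sparseSubsets K (b + 1) + sparseSubsets K (N - b)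
  have hsub : {A : Finset ℕ | A ⊆ range N ∧ IsDecomposable A} ⊆ (rich ∪ sums : Finset _) := by
    rintro A ⟨hAN, hA⟩
    rw [coe_union]
    refine (hA.exists_mem_richSubsets_or_exists_mem_add hAN K).imp ?_ ?_
    · rintro ⟨d, hd, m, hm, h⟩
      exact mem_biUnion.2 ⟨(d, m), mk_mem_product hd hm, h⟩
    · rintro ⟨b, hb, h⟩
      exact mem_biUnion.2 ⟨b, hb, h⟩
  calc _ ≤ (#(rich ∪ sums) : ℝ) := by
        exact_mod_cast (Set.ncard_le_ncard hsub).trans_eq (Set.ncard_coe_finset _)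
    _ ≤ #rich + #sums := by exact_mod_cast card_union_le _ _
    _ ≤ _ := add_le_add (card_biUnion_richSubsets_le hK N) (card_biUnion_sparseSubsets_add_le K N)

theorem tendsto_ncard_isDecomposable_div_two_pow :
    Tendsto (fun N : ℕ =>
      ({A : Finset ℕ | A ⊆ range N ∧ IsDecomposable A}.ncard : ℝ) / 2 ^ N) atTop (𝓝 0) := by
  have hlim : Tendsto (fun N : ℕ => 2 * (N : ℝ)⁻¹ + 207 / 104 * (N ^ 3 * (207 / 208 : ℝ) ^ N))
      atTop (𝓝 0) := by
    have hinv := (tendsto_inv_atTop_nhds_zero_nat (𝕜 := ℝ)).const_mul 2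
    have hexp := (tendsto_pow_const_mul_const_pow_of_abs_lt_one 3
      (r := (207 / 208 : ℝ)) (by norm_num [abs_of_pos])).const_mul (207 / 104)
    simpa using hinv.add hexp
  refine squeeze_zero' (Eventually.of_forall fun N => by positivity) ?_ hlim
  filter_upwards [eventually_gt_atTop 0] with N hN
  rw [div_le_iff₀ (by positivity)]
  refine (ncard_isDecomposable_le hN N).trans_eq ?_
  have hN' : (N : ℝ) ≠ 0 := by positivity
  calc _ = 2 * (N : ℝ)⁻¹ * 2 ^ N + 207 / 104 * N ^ 3 * (207 / 104) ^ N := by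
        field_simp
        ring
    _ = 2 * (N : ℝ)⁻¹ * 2 ^ N + 207 / 104 * N ^ 3 * ((207 / 208) ^ N * 2 ^ N) := by
        rw [← mul_pow]
        norm_num
    _ = _ := by ring

theorem coe_Icc_filter_mem (S : AddSubmonoid ℕ) [DecidablePred (· ∈ S)] (n : ℕ) :
    ((Icc {0} {x ∈ range (n + 1) | x ∈ S} : Finset (Finset ℕ)) : Set (Finset ℕ)) =
      {A | A ∈ Pfin0 S ∧ A.sup id ≤ n} := by
  ext A
  have hsup : A.sup id ≤ n ↔ ∀ x ∈ A, x ≤ n := Finset.sup_le_iff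
  simp only [Pfin0, hsup, mem_Icc, subset_iff, mem_filter, mem_range, Set.mem_ofPred_eq,
    Set.subset_def, SetLike.mem_coe]
  grind

theorem finite_setOf_mem_Pfin0_sup_le (S : AddSubmonoid ℕ) (n : ℕ) :
    {A : Finset ℕ | A ∈ Pfin0 S ∧ A.sup id ≤ n}.Finite := by
  classical
  rw [← coe_Icc_filter_mem]
  exact finite_toSet _

theorem ncard_setOf_mem_Pfin0_sup_le (S : AddSubmonoid ℕ) [DecidablePred (· ∈ S)] (n : ℕ) :
    {A : Finset ℕ | A ∈ Pfin0 S ∧ A.sup id ≤ n}.ncard = 2 ^ (#{x ∈ range (n + 1) | x ∈ S} - 1) := by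
  have h0 : {0} ⊆ {x ∈ range (n + 1) | x ∈ S} := by simp
  rw [← coe_Icc_filter_mem, Set.ncard_coe_finset, card_Icc_finset h0, card_singleton]

theorem two_pow_succ_le_mul_ncard_setOf_mem_Pfin0_sup_le (S : AddSubmonoid ℕ)
    (hfin : ((S : Set ℕ)ᶜ).Finite) (n : ℕ) :
    2 ^ (n + 1) ≤
      2 ^ (#hfin.toFinset + 1) * {A : Finset ℕ | A ∈ Pfin0 S ∧ A.sup id ≤ n}.ncard := by
  classical
  have hgaps : #{x ∈ range (n + 1) | x ∉ S} ≤ #hfin.toFinset :=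
    card_le_card fun x hx => by simpa using (mem_filter.1 hx).2
  have hsplit := card_filter_add_card_filter_not (s := range (n + 1)) (· ∈ S)
  rw [card_range] at hsplit
  rw [ncard_setOf_mem_Pfin0_sup_le, ← pow_add]
  exact Nat.pow_le_pow_right two_pos (by omega)

/-- The elements `A` of `P_fin,0(S)` with `max A ≤ n` that are not atoms; these include the identity
`{0}`. -/
def nonatoms (S : AddSubmonoid ℕ) (n : ℕ) : Set (Finset ℕ) :=
  {A | A ∈ Pfin0 S ∧ A.sup id ≤ n} \ {A | IsAtom0 S A ∧ A.sup id ≤ n}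

theorem ncard_nonatoms_add_ncard_isAtom0 (S : AddSubmonoid ℕ) (n : ℕ) :
    (nonatoms S n).ncard + {A | IsAtom0 S A ∧ A.sup id ≤ n}.ncard =
      {A | A ∈ Pfin0 S ∧ A.sup id ≤ n}.ncard :=
  Set.ncard_sdiff_add_ncard_of_subset (fun _ hA => ⟨hA.1.1, hA.2⟩)
    (finite_setOf_mem_Pfin0_sup_le S n)

theorem eq_singleton_zero_or_isDecomposable_of_mem_nonatoms {S : AddSubmonoid ℕ} {n : ℕ}
    {A : Finset ℕ} (hA : A ∈ nonatoms S n) : A = {0} ∨ IsDecomposable A := by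
  obtain ⟨⟨hAS, hn⟩, hatom⟩ := hA
  by_contra! hA
  refine hatom ⟨⟨hAS, hA.1, fun B hB C hC hBC => ?_⟩, hn⟩
  by_contra! hne
  exact hA.2 ⟨B, C, ⟨hB.1, hne.1⟩, ⟨hC.1, hne.2⟩, hBC⟩

theorem ncard_nonatoms_le (S : AddSubmonoid ℕ) (n : ℕ) :
    (nonatoms S n).ncard ≤
      {A : Finset ℕ | A ⊆ range (n + 1) ∧ IsDecomposable A}.ncard + 1 := by
  have hsub : nonatoms S n ⊆ insert {0} {A | A ⊆ range (n + 1) ∧ IsDecomposable A} := fun A hA =>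
    (eq_singleton_zero_or_isDecomposable_of_mem_nonatoms hA).imp_right fun hdec =>
      ⟨fun _ hx => mem_range_succ_iff.2 ((le_sup (f := id) hx).trans hA.1.2), hdec⟩
  have hfin : {A : Finset ℕ | A ⊆ range (n + 1) ∧ IsDecomposable A}.Finite :=
    (range (n + 1)).powerset.finite_toSet.subset fun _ hA => mem_powerset.2 hA.1
  exact (Set.ncard_le_ncard hsub (hfin.insert _)).trans (Set.ncard_insert_le _ _)

theorem tendsto_ncard_nonatoms_div (S : AddSubmonoid ℕ) (hfin : ((S : Set ℕ)ᶜ).Finite) :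
    Tendsto (fun n : ℕ => ((nonatoms S n).ncard : ℝ) /
      ({A : Finset ℕ | A ∈ Pfin0 S ∧ A.sup id ≤ n}.ncard : ℝ)) atTop (𝓝 0) := by
  set c : ℝ := 2 ^ (#hfin.toFinset + 1)
  set dec : ℕ → Set (Finset ℕ) := fun N => {A | A ⊆ range N ∧ IsDecomposable A}
  have hlim : Tendsto (fun N : ℕ => c * ((dec N).ncard / 2 ^ N + (1 / 2) ^ N)) atTop (𝓝 0) := by
    simpa using (tendsto_ncard_isDecomposable_div_two_pow.add
      (tendsto_pow_atTop_nhds_zero_of_lt_one (by norm_num) one_half_lt_one)).const_mul c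
  refine squeeze_zero (fun n => by positivity) (fun n => ?_)
    (hlim.comp (tendsto_add_atTop_nat 1))
  have htotal : (2 : ℝ) ^ (n + 1) ≤ c * {A : Finset ℕ | A ∈ Pfin0 S ∧ A.sup id ≤ n}.ncard := by
    simp only [c]
    exact_mod_cast two_pow_succ_le_mul_ncard_setOf_mem_Pfin0_sup_le S hfin n
  have hnonatoms : ((nonatoms S n).ncard : ℝ) ≤ (dec (n + 1)).ncard + 1 := by
    exact_mod_cast ncard_nonatoms_le S n
  change _ ≤ c * ((dec (n + 1)).ncard / 2 ^ (n + 1) + (1 / 2) ^ (n + 1))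
  refine div_le_of_le_mul₀ (by positivity) (by positivity) ?_
  calc ((nonatoms S n).ncard : ℝ) ≤ ((dec (n + 1)).ncard + 1) / 2 ^ (n + 1) * 2 ^ (n + 1) := by
        rwa [div_mul_cancel₀ _ (by positivity)]
    _ ≤ ((dec (n + 1)).ncard + 1) / 2 ^ (n + 1) *
        (c * {A : Finset ℕ | A ∈ Pfin0 S ∧ A.sup id ≤ n}.ncard) := by gcongr
    _ = _ := by
        simp only [one_div, inv_pow]
        ring

end

/-- Almost all elements of the restricted power monoid of a numerical monoid are
atoms: the proportion of atoms among elements `A` with `max A ≤ x` tends to `1`. -/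
theorem density_of_atoms (S : AddSubmonoid ℕ) (hfin : ((S : Set ℕ)ᶜ).Finite) :
    Filter.Tendsto
      (fun x : ℕ =>
        (({A : Finset ℕ | IsAtom0 S A ∧ A.sup id ≤ x}.ncard : ℝ) /
          ({A : Finset ℕ | A ∈ Pfin0 S ∧ A.sup id ≤ x}.ncard : ℝ)))
      Filter.atTop (nhds 1) := by
  have hpos (x : ℕ) : (0 : ℝ) < {A : Finset ℕ | A ∈ Pfin0 S ∧ A.sup id ≤ x}.ncard := by
    exact_mod_cast Nat.pos_of_mul_pos_left ((Nat.two_pow_pos (x + 1)).trans_le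
      (two_pow_succ_le_mul_ncard_setOf_mem_Pfin0_sup_le S hfin x))
  have hlim := (tendsto_ncard_nonatoms_div S hfin).const_sub 1
  rw [sub_zero] at hlim
  refine hlim.congr fun x => ?_
  rw [one_sub_div (hpos x).ne', ← ncard_nonatoms_add_ncard_isAtom0, Nat.cast_add,
    add_sub_cancel_left]
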